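/- arXiv:2102.02081 — 2 statements merged into one kernel-verified Lean document; each statement's English description precedes it below -/
import Mathlib

section
/- Let d ≥ 2 be an even integer. Then every prime t ≠ 5 dividing F_{d+1} + F_{d-1} + 1 + (-1)^d (which equals L_d + 2, L_d being the d-th Lucas number) also divides F_d. -/
theorem cassini_aux (n : ℕ) : (Nat.fib n : ℤ) ^ 2 + Nat.fib n * Nat.fib (n + 1)
    - (Nat.fib (n + 1) : ℤ) ^ 2 = (-1) ^ (n + 1) := by
  induction n with
  | zero => simp
  | succ n ih =>
    rw [Nat.fib_add_two (n := n), pow_succ (-1 : ℤ) (n + 1), ← ih]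
    push_cast
    ring

/-- For even `d ≥ 2`, every prime `t ≠ 5` dividing
`F_{d+1} + F_{d-1} + 1 + (-1)^d` also divides `F_d`. -/
theorem stmt_13 (d : ℕ) (hd : 2 ≤ d) (hdeven : Even d) (t : ℕ) (ht : t.Prime) (ht5 : t ≠ 5)
    (htdvd : (t : ℤ) ∣ (Nat.fib (d + 1) : ℤ) + (Nat.fib (d - 1) : ℤ) + 1 + (-1) ^ d) :
    t ∣ Nat.fib d := by
  obtain ⟨n, rfl⟩ : ∃ n, d = n + 1 := ⟨d - 1, by omega⟩
  have hc := cassini_aux n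
  rw [hdeven.neg_one_pow] at hc htdvd
  rw [Nat.add_sub_cancel, Nat.fib_add_two (n := n)] at htdvd
  push_cast at htdvd
  have h : (t : ℤ) ∣ ((5 * Nat.fib (n + 1) ^ 2 : ℕ) : ℤ) := by
    have h2 := htdvd.mul_right (2 * (Nat.fib n : ℤ) + Nat.fib (n + 1) - 2)
    have e : ((5 * Nat.fib (n + 1) ^ 2 : ℕ) : ℤ) =
        ((Nat.fib n : ℤ) + Nat.fib (n + 1) + Nat.fib n + 1 + 1) *
          (2 * (Nat.fib n : ℤ) + Nat.fib (n + 1) - 2) := by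
      push_cast
      linear_combination (-4) * hc
    rw [e]
    first
      | exact h2
      | (convert h2 using 2; ring)
  rw [Int.natCast_dvd_natCast] at h
  rcases ht.dvd_mul.1 h with h | h
  · exact absurd ((Nat.prime_dvd_prime_iff_eq ht Nat.prime_five).1 h) ht5
  · exact ht.dvd_of_dvd_pow h
end

section
/- Let d ≥ 2 be an integer. Suppose that every prime divisor of F_d and every prime divisor of F_{d+1} + F_{d-1} + 1 + (-1)^d is congruent to 2 or 3 modulo 5 (i.e., ≡ ±2 (mod 5)). Then gcd(q^d + 1, q^2 - q - 1) = 1 for every integer q ≥ 2. -/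
lemma zmod_two_aux : ∀ y : ZMod 2, y ^ 2 ≠ y + 1 := by decide

lemma pow_fib_aux {R : Type*} [CommRing R] (x : R) (hx : x ^ 2 = x + 1) (n : ℕ) :
    x ^ (n + 1) = (Nat.fib (n + 1) : R) * x + (Nat.fib n : R) := by
  induction n with
  | zero => simp
  | succ n ih =>
    rw [pow_succ, ih, Nat.fib_add_two]
    push_cast
    linear_combination (Nat.fib (n + 1) : R) * hx

/-- If all prime divisors of `F_d` and of `F_{d+1} + F_{d-1} + 1 + (-1)^d`
are `≡ ±2 (mod 5)`, then `gcd(q^d + 1, q^2 - q - 1) = 1` for all integers `q ≥ 2`. -/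
theorem stmt_15 (d : ℕ) (hd : 2 ≤ d)
    (h1 : ∀ t : ℕ, t.Prime → t ∣ Nat.fib d → t % 5 = 2 ∨ t % 5 = 3)
    (h2 : ∀ t : ℕ, t.Prime →
      (t : ℤ) ∣ (Nat.fib (d + 1) : ℤ) + (Nat.fib (d - 1) : ℤ) + 1 + (-1) ^ d →
      t % 5 = 2 ∨ t % 5 = 3) :
    ∀ q : ℤ, 2 ≤ q → Int.gcd (q ^ d + 1) (q ^ 2 - q - 1) = 1 := by
  intro q _
  by_contra hne
  obtain ⟨p, hp, hpd⟩ := Nat.exists_prime_and_dvd hne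
  have hz : (p : ℤ) ∣ (Int.gcd (q ^ d + 1) (q ^ 2 - q - 1) : ℤ) := by exact_mod_cast hpd
  have ha := hz.trans (Int.gcd_dvd_left _ _)
  have hb := hz.trans (Int.gcd_dvd_right _ _)
  have : Fact p.Prime := ⟨hp⟩
  have ha' := (ZMod.intCast_zmod_eq_zero_iff_dvd _ p).2 ha
  have hb' := (ZMod.intCast_zmod_eq_zero_iff_dvd _ p).2 hb
  push_cast at ha' hb'
  set x : ZMod p := (q : ZMod p) with hxdef
  have hx : x ^ 2 = x + 1 := by linear_combination hb'
  have hy : (1 - x) ^ 2 = (1 - x) + 1 := by linear_combination hb'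
  have hp2 : p ≠ 2 := by
    rintro rfl
    exact zmod_two_aux x hx
  have hmod : p % 5 = 2 ∨ p % 5 = 3 := by
    apply h2 p hp
    rw [← ZMod.intCast_zmod_eq_zero_iff_dvd]
    obtain ⟨n, rfl⟩ : ∃ n, d = n + 1 := ⟨d - 1, by omega⟩
    have e1 := pow_fib_aux x hx n
    have e2 := pow_fib_aux (1 - x) hy n
    have e3 : x ^ (n + 1) * (1 - x) ^ (n + 1) = (-1) ^ (n + 1) := by
      rw [← mul_pow]
      congr 1
      linear_combination -hx
    rw [Nat.fib_add_two]
    simp only [Nat.add_sub_cancel]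
    push_cast
    linear_combination -e1 - e2 - e3 + ha' * (1 + (1 - x) ^ (n + 1))
  have hsq : IsSquare (p : ZMod 5) := by
    have : Fact (Nat.Prime 5) := ⟨by norm_num⟩
    rw [ZMod.exists_sq_eq_prime_iff_of_mod_four_eq_one (p := 5) (q := p) (by norm_num) hp2]
    refine ⟨2 * x - 1, ?_⟩
    push_cast
    linear_combination -4 * hx
  have hc : (p : ZMod 5) = ((p % 5 : ℕ) : ZMod 5) := by simp
  rw [hc] at hsq
  rcases hmod with h | h <;> rw [h] at hsq <;> revert hsq <;> decide
end
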